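/- arXiv:2601.22829 — 2 statements merged into one kernel-verified Lean document; each statement's English description precedes it below -/
import Mathlib

section
/- Let X be a real Hilbert space, T₀ a compact self-adjoint operator, μ̄ a nonzero eigenvalue of T₀ of multiplicity m, and U a bounded open interval with closure(U) ∩ σ(T₀) = {μ̄}. Then for any compact self-adjoint T sufficiently close to T₀ in operator norm, every eigenvalue of T in U has multiplicity at most m (upper semicontinuity of multiplicity under perturbation). -/
/-!
If `A` is bounded below by `c > 0` on a complement `F` of `ker A` and `‖B - A‖ < c`, then `ker B`
meets `F` trivially, so it embeds into `X ⧸ F ≃ ker A`: the dimension of the kernel cannot jump up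
at `A`. For `A = T₀ - μ` with `T₀` compact and `μ ≠ 0`, the kernel is finite-dimensional, so
Hahn-Banach gives a closed complement, and compactness gives the lower bound on it. At a point `s`
outside the spectrum of `T₀`, invertibility of `T₀ - s` is an open condition. Hence each `s` in
the closed interval has the multiplicity bound for all `(T, t)` near `(T₀, s)`, and compactness of
the interval makes the neighbourhood of `T₀` uniform.
-/

open Filter Module Topology

theorem rank_le_rank_of_disjoint_of_isCompl {R M : Type*} [Ring R] [AddCommGroup M] [Module R M]
    {p q r : Submodule R M} (hpr : Disjoint p r) (hqr : IsCompl q r) :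
    Module.rank R p ≤ Module.rank R q := by
  have hinj : Function.Injective ((q.projectionOnto r hqr).domRestrict p) := by
    rw [← LinearMap.ker_eq_bot, LinearMap.ker_domRestrict, Submodule.ker_projectionOnto]
    exact Submodule.disjoint_iff_comap_eq_bot.mp hpr
  exact LinearMap.rank_le_of_injective _ hinj

section NontriviallyNormedField

variable {𝕜 X Y : Type*} [NontriviallyNormedField 𝕜] [NormedAddCommGroup X] [NormedSpace 𝕜 X]
  [NormedAddCommGroup Y] [NormedSpace 𝕜 Y]

theorem disjoint_ker_of_norm_sub_lt {A B : X →L[𝕜] Y} {F : Submodule 𝕜 X} {c : ℝ}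
    (hA : ∀ x ∈ F, c * ‖x‖ ≤ ‖A x‖) (hBA : ‖B - A‖ < c) : Disjoint B.ker F := by
  rw [Submodule.disjoint_def]
  intro x hxB hxF
  by_contra hx
  have hBx : B x = 0 := hxB
  have : c * ‖x‖ < c * ‖x‖ := calc
    c * ‖x‖ ≤ ‖A x‖ := hA x hxF
    _ = ‖(B - A) x‖ := by simp [hBx]
    _ ≤ ‖B - A‖ * ‖x‖ := (B - A).le_opNorm x
    _ < c * ‖x‖ := by gcongr
  exact lt_irrefl _ this

theorem eventually_rank_ker_le_of_isCompl {A : X →L[𝕜] Y} {F : Submodule 𝕜 X} {c : ℝ}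
    (hc : 0 < c) (hF : IsCompl A.ker F) (hA : ∀ x ∈ F, c * ‖x‖ ≤ ‖A x‖) :
    ∀ᶠ B in 𝓝 A, Module.rank 𝕜 B.ker ≤ Module.rank 𝕜 A.ker := by
  filter_upwards [Metric.ball_mem_nhds A hc] with B hB
  exact rank_le_rank_of_disjoint_of_isCompl
    (disjoint_ker_of_norm_sub_lt hA (mem_ball_iff_norm.mp hB)) hF

theorem eventually_ker_eq_bot_of_isUnit [CompleteSpace X] {A : X →L[𝕜] X} (hA : IsUnit A) :
    ∀ᶠ B in 𝓝 A, B.ker = ⊥ := by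
  filter_upwards [Units.isOpen.mem_nhds hA] with B hB
  exact LinearMap.ker_eq_bot.mpr (ContinuousLinearMap.isUnit_iff_bijective.mp hB).injective

theorem isClosed_image_sub_smul_one {T : X →L[𝕜] X} (hT : IsCompactOperator T) {μ : 𝕜}
    (hμ : μ ≠ 0) {s : Set X} (hs : IsClosed s) (hsb : Bornology.IsBounded s) :
    IsClosed ((T - μ • 1 : X →L[𝕜] X) '' s) := by
  refine isClosed_of_closure_subset fun y hy ↦ ?_
  obtain ⟨u, hu, huy⟩ := mem_closure_iff_seq_limit.mp hy
  choose x hxs hxu using hu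
  obtain ⟨K, hK, hTK⟩ := hT.image_subset_compact_of_bounded hsb
  obtain ⟨z, -, φ, hφ, hz⟩ := hK.tendsto_subseq fun n ↦ hTK (Set.mem_image_of_mem T (hxs n))
  have hx_eq (n : ℕ) : x n = μ⁻¹ • (T (x n) - u n) := by
    simp [← hxu, inv_smul_smul₀ hμ]
  have hx : Tendsto (x ∘ φ) atTop (𝓝 (μ⁻¹ • (z - y))) :=
    ((hz.sub (huy.comp hφ.tendsto_atTop)).const_smul μ⁻¹).congr fun n ↦ (hx_eq (φ n)).symm
  refine ⟨_, hs.mem_of_tendsto hx (Eventually.of_forall fun n ↦ hxs (φ n)), ?_⟩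
  refine tendsto_nhds_unique (((T - μ • 1 : X →L[𝕜] X).continuous.tendsto _).comp hx) ?_
  exact (huy.comp hφ.tendsto_atTop).congr fun n ↦ (hxu (φ n)).symm

theorem eigenspace_eq_ker_sub_smul_one (T : X →L[𝕜] X) (t : 𝕜) :
    End.eigenspace (T : End 𝕜 X) t = (T - t • 1).ker := by
  ext x
  simp [sub_eq_zero]

theorem finiteDimensional_eigenspace_of_isCompactOperator [ProperSpace 𝕜] {T : X →L[𝕜] X}
    (hT : IsCompactOperator T) {μ : 𝕜} (hμ : μ ≠ 0) :
    FiniteDimensional 𝕜 (End.eigenspace (T : End 𝕜 X) μ) := by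
  have hclosed : IsClosed (End.eigenspace (T : End 𝕜 X) μ : Set X) := by
    rw [eigenspace_eq_ker_sub_smul_one]
    exact (T - μ • 1).isClosed_ker
  have hres := hT.restrict ((End.mem_invtSubmodule_iff_forall_mem_of_mem _).mp
    (End.eigenspace_mem_invtSubmodule (T : End 𝕜 X) μ)) hclosed
  rw [End.restrict_eigenspace, LinearMap.coe_smul, IsCompactOperator.smul_iff₀ hμ] at hres
  rwa [← isCompactOperator_id_iff_finiteDimensional]

end NontriviallyNormedField

section RCLike

variable {𝕜 X : Type*} [RCLike 𝕜] [NormedAddCommGroup X] [NormedSpace 𝕜 X]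
  {T : X →L[𝕜] X} {μ : 𝕜}

theorem exists_mul_norm_le_norm_sub_smul_one_apply (hT : IsCompactOperator T) (hμ : μ ≠ 0)
    {F : Submodule 𝕜 X} (hF : IsClosed (F : Set X)) (hdisj : Disjoint (T - μ • 1).ker F) :
    ∃ c > 0, ∀ x ∈ F, c * ‖x‖ ≤ ‖(T - μ • 1) x‖ := by
  set A := T - μ • 1
  have hclosed : IsClosed (A '' (F ∩ Metric.sphere 0 1)) :=
    isClosed_image_sub_smul_one hT hμ (hF.inter Metric.isClosed_sphere)
      (Metric.isBounded_sphere.subset Set.inter_subset_right)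
  have hzero : (0 : X) ∉ A '' (F ∩ Metric.sphere 0 1) := by
    rintro ⟨x, ⟨hxF, hx⟩, hAx⟩
    have : x = 0 := Submodule.disjoint_def.mp hdisj x hAx hxF
    simp [this] at hx
  obtain ⟨c, hc, hball⟩ := Metric.mem_nhds_iff.mp (hclosed.isOpen_compl.mem_nhds hzero)
  refine ⟨c, hc, fun x hxF ↦ ?_⟩
  rcases eq_or_ne x 0 with rfl | hx
  · simp
  let r : 𝕜 := (‖x‖⁻¹ : ℝ)
  have hr : ‖r‖ = ‖x‖⁻¹ := by simp [r]
  have hunit : A (r • x) ∈ A '' (F ∩ Metric.sphere 0 1) :=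
    Set.mem_image_of_mem A ⟨F.smul_mem r hxF, by simp [norm_smul, hr, hx]⟩
  have hle : c ≤ ‖A (r • x)‖ := by
    by_contra! hlt
    exact hball (mem_ball_zero_iff.mpr hlt) hunit
  rwa [map_smul, norm_smul, hr, le_inv_mul_iff₀' (norm_pos_iff.mpr hx)] at hle

theorem eventually_rank_ker_sub_smul_one_le (hT : IsCompactOperator T) (hμ : μ ≠ 0) :
    ∀ᶠ B in 𝓝 (T - μ • 1), Module.rank 𝕜 B.ker ≤ Module.rank 𝕜 (T - μ • 1).ker := by
  have : FiniteDimensional 𝕜 (T - μ • 1).ker :=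
    eigenspace_eq_ker_sub_smul_one T μ ▸ finiteDimensional_eigenspace_of_isCompactOperator hT hμ
  obtain ⟨F, hF, hcompl⟩ :=
    (Submodule.ClosedComplemented.of_finiteDimensional (T - μ • 1).ker).exists_isClosed_isCompl
  obtain ⟨c, hc, hbound⟩ :=
    exists_mul_norm_le_norm_sub_smul_one_apply hT hμ hF hcompl.disjoint
  exact eventually_rank_ker_le_of_isCompl hc hcompl hbound

theorem stmt9_general [CompleteSpace X] {T₀ : X →L[𝕜] X} (hT₀ : IsCompactOperator T₀)
    (hμ : μ ≠ 0) {K : Set 𝕜} (hK : IsCompact K) (hKσ : K ∩ spectrum 𝕜 T₀ ⊆ {μ}) :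
    ∀ᶠ T : X →L[𝕜] X in 𝓝 T₀, ∀ t ∈ K, Module.rank 𝕜 (End.eigenspace (T : End 𝕜 X) t) ≤
      Module.rank 𝕜 (End.eigenspace (T₀ : End 𝕜 X) μ) := by
  have hrank (T : X →L[𝕜] X) (t : 𝕜) :
      Module.rank 𝕜 (End.eigenspace (T : End 𝕜 X) t) = Module.rank 𝕜 (T - t • 1).ker := by
    rw [eigenspace_eq_ker_sub_smul_one]
  simp only [hrank]
  refine hK.eventually_forall_of_forall_eventually fun s hs ↦ ?_
  have hcont : Tendsto (fun z : (X →L[𝕜] X) × 𝕜 ↦ z.1 - z.2 • (1 : X →L[𝕜] X)) (𝓝 (T₀, s))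
      (𝓝 (T₀ - s • 1)) :=
    Continuous.tendsto (by fun_prop) (T₀, s)
  refine hcont.eventually (p := fun B ↦ Module.rank 𝕜 B.ker ≤ _) ?_
  by_cases hsσ : s ∈ spectrum 𝕜 T₀
  · obtain rfl : s = μ := hKσ ⟨hs, hsσ⟩
    exact eventually_rank_ker_sub_smul_one_le hT₀ hμ
  · have hunit : IsUnit (T₀ - s • 1) := by
      rw [← IsUnit.neg_iff, neg_sub, ← Algebra.algebraMap_eq_smul_one]
      exact spectrum.notMem_iff.mp hsσ
    filter_upwards [eventually_ker_eq_bot_of_isUnit hunit] with B hB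
    rw [hB, rank_bot]
    exact zero_le

end RCLike

/-- Upper semicontinuity of multiplicity: let `T₀` be a compact self-adjoint operator,
`μ̄ ≠ 0` an eigenvalue of `T₀` of multiplicity `m`, and `U = (a, b)` a bounded open
interval with `closure U ∩ σ(T₀) = {μ̄}`. Then for any compact self-adjoint `T`
sufficiently close to `T₀` in operator norm, every eigenvalue of `T` in `U` has
multiplicity at most `m`. -/
theorem stmt9 {X : Type*} [NormedAddCommGroup X] [InnerProductSpace ℝ X] [CompleteSpace X]
    (T₀ : X →L[ℝ] X) (hcomp : IsCompactOperator T₀) (hsa : IsSelfAdjoint T₀)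
    (μ : ℝ) (hμ : μ ≠ 0) (m : ℕ)
    (heig : Module.End.HasEigenvalue (T₀ : X →ₗ[ℝ] X) μ)
    (hmult : Module.finrank ℝ (Module.End.eigenspace (T₀ : X →ₗ[ℝ] X) μ) = m)
    (a b : ℝ) (hU : closure (Set.Ioo a b) ∩ spectrum ℝ T₀ = {μ}) :
    ∃ ε > 0, ∀ T : X →L[ℝ] X, IsCompactOperator T → IsSelfAdjoint T → ‖T - T₀‖ < ε →
      ∀ t ∈ Set.Ioo a b,
        Module.finrank ℝ (Module.End.eigenspace (T : X →ₗ[ℝ] X) t) ≤ m := by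
  have := finiteDimensional_eigenspace_of_isCompactOperator hcomp hμ
  obtain ⟨ε, hε, h⟩ := Metric.eventually_nhds_iff.mp <|
    stmt9_general hcomp hμ (Metric.isBounded_Ioo a b).isCompact_closure hU.subset
  refine ⟨ε, hε, fun T _ _ hT t ht ↦ hmult ▸ ?_⟩
  exact Cardinal.toNat_le_toNat (h (by rwa [dist_eq_norm]) t (subset_closure ht))
    (Module.rank_lt_aleph0 ℝ _)
end

section
/- Let ψ : ℝⁿ → ℝⁿ be C¹, Ω ⊂ ℝⁿ a bounded open set, and for ε small set Ω_ε = (I + εψ)(Ω). For u, φ ∈ C²(ℝⁿ), define 𝒜(ε) = ∫_{Ω_ε} ∇(u ∘ (I+εψ)^{-1}) · ∇(φ ∘ (I+εψ)^{-1}) dξ. Then 𝒜 is differentiable at ε = 0 and 𝒜'(0) = ∫_Ω [div ψ · ∇u·∇φ − ∑_{i,j} (∂ᵢu ∂ⱼφ + ∂ⱼu ∂ᵢφ) ∂ⱼψᵢ] dx. -/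
open MeasureTheory

open Filter Topology
open scoped NNReal Ring

/-!
As `Dψ` is bounded, `x ↦ x + εψ(x)` is injective with invertible derivative for small `ε`.
Substituting `ξ = x + εψ(x)` moves the energy of `u ∘ (I + εψ)⁻¹` and `φ ∘ (I + εψ)⁻¹` on `Ω_ε`
back to the fixed domain `Ω`, where the integrand is `|det A| B(Du ∘ A⁻¹, Dφ ∘ A⁻¹)` with
`A = I + εDψ` and `B` the bilinear form defining the energy. At `ε = 0` its derivative comes from
`det (I + εM) = 1 + ε tr M + o(ε)` and `(I + εM)⁻¹ = I - εM + o(ε)`. At any other `ε` it comes from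
`A + hM = (I + hMA⁻¹)A`, which reduces it to the case `ε = 0`. The resulting formula is jointly
continuous in `(ε, x)`, hence bounded on compact sets, so differentiation under the integral is
legitimate.
-/

section ParametricIntegral

variable {𝕜 X G : Type*} [RCLike 𝕜] [TopologicalSpace X] [MeasurableSpace X]
  [OpensMeasurableSpace X] [NormedAddCommGroup G] [NormedSpace ℝ G] [NormedSpace 𝕜 G]

theorem hasDerivAt_setIntegral_of_continuousOn {μ : Measure X} [IsFiniteMeasureOnCompacts μ]
    {F F' : 𝕜 → X → G} {t₀ : 𝕜} {U : Set 𝕜} {S K : Set X} (hU : U ∈ 𝓝 t₀) (hK : IsCompact K)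
    (hS : MeasurableSet S) (hSK : S ⊆ K)
    (hF : ∀ t ∈ U, ContinuousOn (F t) K) (hF' : ContinuousOn (fun z : 𝕜 × X => F' z.1 z.2) (U ×ˢ K))
    (hderiv : ∀ t ∈ U, ∀ x ∈ K, HasDerivAt (F · x) (F' t x) t) :
    HasDerivAt (fun t => ∫ x in S, F t x ∂μ) (∫ x in S, F' t₀ x ∂μ) t₀ := by
  obtain ⟨V, hV, hVU, hVcompact⟩ := local_compact_nhds hU
  obtain ⟨C, hC⟩ := (hVcompact.prod hK).exists_bound_of_continuousOn
    (hF'.mono (Set.prod_mono_left hVU))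
  have ht₀ : t₀ ∈ U := mem_of_mem_nhds hU
  have hF'₀ : ContinuousOn (F' t₀) K :=
    hF'.comp (f := fun x => (t₀, x)) (by fun_prop) fun x hx => ⟨ht₀, hx⟩
  have hμS : μ S ≠ ⊤ := measure_ne_top_of_subset hSK hK.measure_ne_top
  refine (hasDerivAt_integral_of_dominated_loc_of_deriv_le (bound := fun _ => C) hV
    ?_ ?_ ?_ ?_ (integrableOn_const hμS) ?_).2
  · filter_upwards [hU] with t ht
    exact (hF t ht).aestronglyMeasurable_of_subset_isCompact hK hS hSK
  · exact (hF t₀ ht₀).integrableOn_of_subset_isCompact hK hS hSK hμS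
  · exact hF'₀.aestronglyMeasurable_of_subset_isCompact hK hS hSK
  · exact ae_restrict_of_forall_mem hS fun x hx t ht => hC (t, x) ⟨ht, hSK hx⟩
  · exact ae_restrict_of_forall_mem hS fun x hx t ht => hderiv t (hVU ht) x (hSK hx)

end ParametricIntegral

section Determinant

variable {𝕜 : Type*} [NontriviallyNormedField 𝕜]

theorem hasDerivAt_matrix_det_one_add_smul {n : Type*} [Fintype n] [DecidableEq n]
    (A : Matrix n n 𝕜) : HasDerivAt (fun t : 𝕜 => (1 + t • A).det) A.trace 0 := by
  have heval (t : 𝕜) :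
      (Matrix.det (1 + (Polynomial.X : Polynomial 𝕜) • A.map Polynomial.C)).eval t =
        (1 + t • A).det := by
    simp [eval_det, ← Matrix.smul_eq_mul_diagonal]
  have hderiv :=
    (Matrix.det (1 + (Polynomial.X : Polynomial 𝕜) • A.map Polynomial.C)).hasDerivAt 0
  rw [Matrix.derivative_det_one_add_X_smul] at hderiv
  exact hderiv.congr_of_eventuallyEq (.of_forall fun t => (heval t).symm)

variable {E : Type*} [NormedAddCommGroup E] [NormedSpace 𝕜 E] [FiniteDimensional 𝕜 E]

theorem hasDerivAt_det_one_add_smul (M : E →L[𝕜] E) :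
    HasDerivAt (fun t : 𝕜 => (1 + t • M).det) (LinearMap.trace 𝕜 E M) 0 := by
  let b := Module.finBasis 𝕜 E
  have hdet (t : 𝕜) : (1 + t • M).det = (1 + t • LinearMap.toMatrix b b M).det := by
    rw [ContinuousLinearMap.det, ← LinearMap.det_toMatrix b]
    simp [LinearMap.toMatrix_one]
  simpa only [hdet, LinearMap.trace_eq_matrix_trace 𝕜 b] using
    hasDerivAt_matrix_det_one_add_smul (LinearMap.toMatrix b b M)

end Determinant

theorem hasDerivAt_abs_det_one_add_smul {E : Type*} [NormedAddCommGroup E] [NormedSpace ℝ E]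
    [FiniteDimensional ℝ E] (M : E →L[ℝ] E) :
    HasDerivAt (fun t : ℝ => |(1 + t • M).det|) (LinearMap.trace ℝ E M) 0 := by
  have hdet := hasDerivAt_det_one_add_smul M
  have hpos : ∀ᶠ t : ℝ in 𝓝 0, 0 < (1 + t • M).det :=
    hdet.continuousAt.eventually (lt_mem_nhds (by simp [ContinuousLinearMap.det]))
  exact hdet.congr_of_eventuallyEq (hpos.mono fun t ht => abs_of_pos ht)

theorem hasDerivAt_ringInverse_one_add_smul {𝕜 R : Type*} [NontriviallyNormedField 𝕜]
    [NormedRing R] [HasSummableGeomSeries R] [NormedAlgebra 𝕜 R] (a : R) :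
    HasDerivAt (fun t : 𝕜 => (1 + t • a)⁻¹ʳ) (-a) 0 := by
  have hline : HasDerivAt (fun t : 𝕜 => 1 + t • a) a 0 := by
    simpa using ((hasDerivAt_id (0 : 𝕜)).smul_const a).const_add 1
  simpa using! (hasFDerivAt_ringInverse (𝕜 := 𝕜) (1 : Rˣ)).comp_hasDerivAt_of_eq 0 hline
    (by simp)

theorem continuousOn_ringInverse {X R : Type*} [TopologicalSpace X] [NormedRing R]
    [HasSummableGeomSeries R] {a : X → R} {s : Set X} (ha : ContinuousOn a s)
    (hunit : ∀ x ∈ s, IsUnit (a x)) : ContinuousOn (fun x => (a x)⁻¹ʳ) s := fun x hx =>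
  ContinuousAt.comp_continuousWithinAt (g := Ring.inverse)
    (NormedRing.inverse_continuousAt (hunit x hx).unit) (ha x hx)

theorem setOf_norm_mul_lt_one_mem_nhds_zero {E : Type*} [SeminormedAddCommGroup E] (C : ℝ) :
    {t : E | ‖t‖ * C < 1} ∈ 𝓝 0 :=
  (isOpen_lt (by fun_prop) continuous_const).mem_nhds (by simp)

theorem isUnit_one_add_smul_of_norm_lt_one {𝕜 R : Type*} [NormedField 𝕜] [NormedRing R]
    [HasSummableGeomSeries R] [NormedAlgebra 𝕜 R] {t : 𝕜} {a : R} (h : ‖t‖ * ‖a‖ < 1) :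
    IsUnit (1 + t • a) := by
  have hnorm : ‖-(t • a)‖ < 1 := by rwa [norm_neg, norm_smul]
  simpa using isUnit_one_sub_of_norm_lt_one hnorm

theorem injective_add_smul_of_lipschitzWith {𝕜 E : Type*} [NormedField 𝕜]
    [NormedAddCommGroup E] [NormedSpace 𝕜 E] {ψ : E → E} {K : ℝ≥0} {t : 𝕜}
    (hψ : LipschitzWith K ψ) (ht : ‖t‖₊ * K < 1) :
    Function.Injective fun x => x + t • ψ x :=
  (AntilipschitzWith.id.add_lipschitzWith ((lipschitzWith_smul t).comp hψ)
    (by simpa using ht)).injective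

theorem hasFDerivAt_comp_invFun {𝕜 E E' F : Type*} [NontriviallyNormedField 𝕜]
    [NormedAddCommGroup E] [NormedSpace 𝕜 E] [CompleteSpace E]
    [NormedAddCommGroup E'] [NormedSpace 𝕜 E'] [NormedAddCommGroup F] [NormedSpace 𝕜 F]
    {f : E → E'} {f' : E ≃L[𝕜] E'} {u : E → F} {u' : E →L[𝕜] F} {x : E}
    (hinj : Function.Injective f) (hf : HasStrictFDerivAt f (f' : E →L[𝕜] E') x)
    (hu : HasFDerivAt u u' x) :
    HasFDerivAt (u ∘ Function.invFun f) (u' ∘L (f'.symm : E' →L[𝕜] E)) (f x) := by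
  have hleft : Function.LeftInverse (Function.invFun f) f := Function.leftInverse_invFun hinj
  have hinv : HasStrictFDerivAt (Function.invFun f) (f'.symm : E' →L[𝕜] E) (f x) :=
    hf.to_local_left_inverse (.of_forall hleft)
  rw [← hleft x] at hu
  exact hu.comp (f x) hinv.hasFDerivAt

section Density

variable {E F₁ F₂ G : Type*} [NormedAddCommGroup E] [NormedSpace ℝ E]
  [NormedAddCommGroup F₁] [NormedSpace ℝ F₁] [NormedAddCommGroup F₂] [NormedSpace ℝ F₂]
  [NormedAddCommGroup G] [NormedSpace ℝ G]
  (B : (E →L[ℝ] F₁) →L[ℝ] (E →L[ℝ] F₂) →L[ℝ] G)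

/-- The energy density `B(D(u ∘ T⁻¹), D(φ ∘ T⁻¹))` pulled back by a diffeomorphism `T`, as a
function of `A = DT`, `p = Du` and `q = Dφ`. It is `0` when `A` is not invertible, as then
`A⁻¹ʳ = 0`. -/
noncomputable def pullbackDensity (A : E →L[ℝ] E) (p : E →L[ℝ] F₁) (q : E →L[ℝ] F₂) : G :=
  |A.det| • B (p ∘L A⁻¹ʳ) (q ∘L A⁻¹ʳ)

/-- The first variation of the energy density `B(p, q)` along a vector field with derivative `M`,
so that `LinearMap.trace ℝ E M` is the divergence of the field. -/
noncomputable def densityVariation (M : E →L[ℝ] E) (p : E →L[ℝ] F₁) (q : E →L[ℝ] F₂) : G :=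
  LinearMap.trace ℝ E M • B p q - B (p ∘L M) q - B p (q ∘L M)

theorem pullbackDensity_mul (A' : E →L[ℝ] E) {A : E →L[ℝ] E} (hA : IsUnit A)
    (p : E →L[ℝ] F₁) (q : E →L[ℝ] F₂) :
    pullbackDensity B (A' * A) p q =
      |A.det| • pullbackDensity B A' (p ∘L A⁻¹ʳ) (q ∘L A⁻¹ʳ) := by
  have hdet : (A' * A).det = A.det * A'.det := by
    rw [mul_comm]
    exact LinearMap.det_comp _ _
  rw [pullbackDensity, pullbackDensity, Ring.inverse_mul (.inr hA), hdet, abs_mul, mul_smul]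
  rfl

section FiniteDimensional

variable [FiniteDimensional ℝ E]

theorem hasDerivAt_pullbackDensity_one (M : E →L[ℝ] E) (p : E →L[ℝ] F₁) (q : E →L[ℝ] F₂) :
    HasDerivAt (fun t : ℝ => pullbackDensity B (1 + t • M) p q) (densityVariation B M p q) 0 := by
  have := FiniteDimensional.complete ℝ E
  have hinv : HasDerivAt (fun t : ℝ => (1 + t • M)⁻¹ʳ) (-M) 0 :=
    hasDerivAt_ringInverse_one_add_smul M
  have hp : HasDerivAt (fun t : ℝ => p ∘L (1 + t • M)⁻¹ʳ) (-(p ∘L M)) 0 := by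
    simpa using (hasDerivAt_const (0 : ℝ) p).clm_comp hinv
  have hq : HasDerivAt (fun t : ℝ => q ∘L (1 + t • M)⁻¹ʳ) (-(q ∘L M)) 0 := by
    simpa using (hasDerivAt_const (0 : ℝ) q).clm_comp hinv
  have hB := B.hasDerivAt_of_bilinear (fun _ => hp) (fun _ => hq)
  refine ((hasDerivAt_abs_det_one_add_smul M).smul hB).congr_deriv ?_
  have hdet : (1 : E →L[ℝ] E).det = 1 := LinearMap.det_id
  simp only [densityVariation, zero_smul, add_zero, Ring.inverse_one, hdet, abs_one, one_smul,
    map_neg, neg_apply]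
  simp only [ContinuousLinearMap.one_def, ContinuousLinearMap.comp_id]
  abel

theorem hasDerivAt_pullbackDensity {A M : E →L[ℝ] E} {t : ℝ} (hA : IsUnit (A + t • M))
    (p : E →L[ℝ] F₁) (q : E →L[ℝ] F₂) :
    HasDerivAt (fun s : ℝ => pullbackDensity B (A + s • M) p q)
      (|(A + t • M).det| • densityVariation B (M * (A + t • M)⁻¹ʳ)
        (p ∘L (A + t • M)⁻¹ʳ) (q ∘L (A + t • M)⁻¹ʳ)) t := by
  have hfactor (s : ℝ) :
      A + s • M = (1 + (s - t) • (M * (A + t • M)⁻¹ʳ)) * (A + t • M) := by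
    rw [add_mul, one_mul, smul_mul_assoc, Ring.inverse_mul_cancel_right _ _ hA, sub_smul]
    abel
  have hshift : HasDerivAt (fun s : ℝ => s - t) 1 t := (hasDerivAt_id t).sub_const t
  have hone := (hasDerivAt_pullbackDensity_one B (M * (A + t • M)⁻¹ʳ)
    (p ∘L (A + t • M)⁻¹ʳ) (q ∘L (A + t • M)⁻¹ʳ)).scomp_of_eq t hshift (sub_self t).symm
  refine ((hone.const_smul |(A + t • M).det|).congr_deriv (by rw [one_smul])).congr_of_eventuallyEq
    (.of_forall fun s => ?_)
  simp only [Function.comp_apply, Pi.smul_apply]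
  rw [← pullbackDensity_mul B _ hA, ← hfactor]

theorem continuousOn_pullbackDensity {X : Type*} [TopologicalSpace X] {s : Set X}
    {A : X → E →L[ℝ] E} {p : X → E →L[ℝ] F₁} {q : X → E →L[ℝ] F₂}
    (hA : ContinuousOn A s) (hunit : ∀ x ∈ s, IsUnit (A x)) (hp : ContinuousOn p s)
    (hq : ContinuousOn q s) : ContinuousOn (fun x => pullbackDensity B (A x) (p x) (q x)) s := by
  have := FiniteDimensional.complete ℝ E
  have hinv := continuousOn_ringInverse hA hunit
  have hdet : ContinuousOn (fun x => (A x).det) s :=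
    ContinuousLinearMap.continuous_det.comp_continuousOn hA
  exact hdet.abs.smul
    ((B.continuous.comp_continuousOn (hp.clm_comp hinv)).clm_apply (hq.clm_comp hinv))

theorem continuous_densityVariation :
    Continuous fun z : (E →L[ℝ] E) × (E →L[ℝ] F₁) × (E →L[ℝ] F₂) =>
      densityVariation B z.1 z.2.1 z.2.2 := by
  have htrace : Continuous fun M : E →L[ℝ] E => LinearMap.trace ℝ E M :=
    (LinearMap.trace ℝ E ∘ₗ ContinuousLinearMap.coeLM ℝ).continuous_of_finiteDimensional
  exact (((htrace.comp continuous_fst).smul (by fun_prop)).sub (by fun_prop)).sub (by fun_prop)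

theorem continuousOn_deriv_pullbackDensity {X : Type*} [TopologicalSpace X] {s : Set X}
    {A M : X → E →L[ℝ] E} {p : X → E →L[ℝ] F₁} {q : X → E →L[ℝ] F₂}
    (hA : ContinuousOn A s) (hunit : ∀ x ∈ s, IsUnit (A x)) (hM : ContinuousOn M s)
    (hp : ContinuousOn p s) (hq : ContinuousOn q s) :
    ContinuousOn (fun x => |(A x).det| • densityVariation B (M x * (A x)⁻¹ʳ)
      (p x ∘L (A x)⁻¹ʳ) (q x ∘L (A x)⁻¹ʳ)) s := by
  have := FiniteDimensional.complete ℝ E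
  have hinv := continuousOn_ringInverse hA hunit
  have hdet : ContinuousOn (fun x => (A x).det) s :=
    ContinuousLinearMap.continuous_det.comp_continuousOn hA
  exact hdet.abs.smul ((continuous_densityVariation B).comp_continuousOn
    ((hM.mul hinv).prodMk ((hp.clm_comp hinv).prodMk (hq.clm_comp hinv))))

variable [MeasurableSpace E] [BorelSpace E] {μ : Measure E} [μ.IsAddHaarMeasure]

theorem setIntegral_image_comp_invFun {f : E → E} {f' : E → E →L[ℝ] E} {u : E → F₁} {φ : E → F₂}
    {s : Set E} (hs : MeasurableSet s) (hinj : Function.Injective f)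
    (hf : ∀ x ∈ s, HasStrictFDerivAt f (f' x) x) (hunit : ∀ x ∈ s, IsUnit (f' x))
    (hu : ∀ x ∈ s, DifferentiableAt ℝ u x) (hφ : ∀ x ∈ s, DifferentiableAt ℝ φ x) :
    ∫ ξ in f '' s, B (fderiv ℝ (u ∘ Function.invFun f) ξ) (fderiv ℝ (φ ∘ Function.invFun f) ξ) ∂μ =
      ∫ x in s, pullbackDensity B (f' x) (fderiv ℝ u x) (fderiv ℝ φ x) ∂μ := by
  have := FiniteDimensional.complete ℝ E
  rw [integral_image_eq_integral_abs_det_fderiv_smul μ hs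
    (fun x hx => (hf x hx).hasFDerivAt.hasFDerivWithinAt) hinj.injOn]
  refine setIntegral_congr_fun hs fun x hx => ?_
  obtain ⟨A, hA⟩ := hunit x hx
  have hfx : HasStrictFDerivAt f (ContinuousLinearEquiv.ofUnit A : E →L[ℝ] E) x :=
    (hf x hx).congr_fderiv hA.symm
  simp only [pullbackDensity, ← hA, Ring.inverse_unit,
    (hasFDerivAt_comp_invFun hinj hfx (hu x hx).hasFDerivAt).fderiv,
    (hasFDerivAt_comp_invFun hinj hfx (hφ x hx).hasFDerivAt).fderiv]
  rfl

theorem hasDerivAt_setIntegral_pullbackDensity {M : E → E →L[ℝ] E} {p : E → E →L[ℝ] F₁}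
    {q : E → E →L[ℝ] F₂} {Ω : Set E} {C : ℝ} (hM : Continuous M) (hMC : ∀ x, ‖M x‖ ≤ C)
    (hp : Continuous p) (hq : Continuous q) (hΩ : MeasurableSet Ω)
    (hΩb : Bornology.IsBounded Ω) :
    HasDerivAt (fun t : ℝ => ∫ x in Ω, pullbackDensity B (1 + t • M x) (p x) (q x) ∂μ)
      (∫ x in Ω, densityVariation B (M x) (p x) (q x) ∂μ) 0 := by
  have := FiniteDimensional.complete ℝ E
  have hunit : ∀ t ∈ {t : ℝ | ‖t‖ * C < 1}, ∀ x, IsUnit (1 + t • M x) := fun t ht x =>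
    isUnit_one_add_smul_of_norm_lt_one
      ((mul_le_mul_of_nonneg_left (hMC x) (norm_nonneg t)).trans_lt ht)
  have hderiv := hasDerivAt_setIntegral_of_continuousOn (μ := μ)
    (F := fun t x => pullbackDensity B (1 + t • M x) (p x) (q x))
    (F' := fun t x => |(1 + t • M x).det| • densityVariation B (M x * (1 + t • M x)⁻¹ʳ)
      (p x ∘L (1 + t • M x)⁻¹ʳ) (q x ∘L (1 + t • M x)⁻¹ʳ))
    (setOf_norm_mul_lt_one_mem_nhds_zero C) hΩb.isCompact_closure hΩ subset_closure
    (fun t ht => continuousOn_pullbackDensity B (by fun_prop) (fun x _ => hunit t ht x)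
      hp.continuousOn hq.continuousOn)
    (continuousOn_deriv_pullbackDensity B (by fun_prop) (fun z hz => hunit z.1 hz.1 z.2)
      (by fun_prop) (by fun_prop) (by fun_prop))
    fun t ht x _ => hasDerivAt_pullbackDensity B (hunit t ht x) (p x) (q x)
  refine hderiv.congr_deriv (setIntegral_congr_fun hΩ fun x _ => ?_)
  have hone : IsUnit (1 + (0 : ℝ) • M x) := hunit 0 (by simp) x
  exact (hasDerivAt_pullbackDensity B hone (p x) (q x)).unique
    (hasDerivAt_pullbackDensity_one B (M x) (p x) (q x))

end FiniteDimensional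

end Density

theorem stmt18_general {E F₁ F₂ G : Type*} [NormedAddCommGroup E] [NormedSpace ℝ E]
    [FiniteDimensional ℝ E] [MeasurableSpace E] [BorelSpace E]
    [NormedAddCommGroup F₁] [NormedSpace ℝ F₁] [NormedAddCommGroup F₂] [NormedSpace ℝ F₂]
    [NormedAddCommGroup G] [NormedSpace ℝ G] (μ : Measure E) [μ.IsAddHaarMeasure]
    (B : (E →L[ℝ] F₁) →L[ℝ] (E →L[ℝ] F₂) →L[ℝ] G) {ψ : E → E} (hψ : ContDiff ℝ 1 ψ) {C : ℝ}
    (hψC : ∀ x, ‖fderiv ℝ ψ x‖ ≤ C) {Ω : Set E} (hΩ : MeasurableSet Ω)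
    (hΩb : Bornology.IsBounded Ω) {u : E → F₁} {φ : E → F₂} (hu : ContDiff ℝ 1 u)
    (hφ : ContDiff ℝ 1 φ) :
    HasDerivAt
      (fun ε : ℝ => ∫ ξ in (fun x => x + ε • ψ x) '' Ω,
        B (fderiv ℝ (u ∘ Function.invFun fun x => x + ε • ψ x) ξ)
          (fderiv ℝ (φ ∘ Function.invFun fun x => x + ε • ψ x) ξ) ∂μ)
      (∫ x in Ω, densityVariation B (fderiv ℝ ψ x) (fderiv ℝ u x) (fderiv ℝ φ x) ∂μ) 0 := by
  have hC : 0 ≤ C := (norm_nonneg _).trans (hψC 0)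
  have hlip : LipschitzWith C.toNNReal ψ :=
    lipschitzWith_of_nnnorm_fderiv_le (hψ.differentiable one_ne_zero) fun x =>
      NNReal.le_toNNReal_of_coe_le (hψC x)
  have hpullback := hasDerivAt_setIntegral_pullbackDensity (μ := μ) B
    (hψ.continuous_fderiv one_ne_zero) hψC (hu.continuous_fderiv one_ne_zero)
    (hφ.continuous_fderiv one_ne_zero) hΩ hΩb
  refine hpullback.congr_of_eventuallyEq ?_
  filter_upwards [setOf_norm_mul_lt_one_mem_nhds_zero C] with ε hε
  have hinj : Function.Injective fun x => x + ε • ψ x := by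
    refine injective_add_smul_of_lipschitzWith hlip ?_
    rwa [← NNReal.coe_lt_coe, NNReal.coe_mul, coe_nnnorm, Real.coe_toNNReal C hC, NNReal.coe_one]
  have hstrict (x : E) :
      HasStrictFDerivAt (fun x => x + ε • ψ x) (1 + ε • fderiv ℝ ψ x) x :=
    (hasStrictFDerivAt_id x).add
      ((hψ.contDiffAt.hasStrictFDerivAt one_ne_zero).const_smul ε)
  exact setIntegral_image_comp_invFun B hΩ hinj (fun x _ => hstrict x)
    (fun x _ => isUnit_one_add_smul_of_norm_lt_one
      ((mul_le_mul_of_nonneg_left (hψC x) (norm_nonneg ε)).trans_lt hε))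
    (fun x _ => hu.differentiable one_ne_zero x) fun x _ => hφ.differentiable one_ne_zero x

set_option maxSynthPendingDepth 3 in
/-- The form `(Du, Dφ) ↦ ∇u · ∇φ` in the standard coordinates of Euclidean space, with gradients
represented by the derivatives `Du`, `Dφ`. -/
noncomputable def dirichletForm (ι : Type*) [Fintype ι] [DecidableEq ι] :
    (EuclideanSpace ℝ ι →L[ℝ] ℝ) →L[ℝ] (EuclideanSpace ℝ ι →L[ℝ] ℝ) →L[ℝ] ℝ :=
  ∑ i, (ContinuousLinearMap.mul ℝ ℝ).bilinearComp
    (ContinuousLinearMap.apply ℝ ℝ (EuclideanSpace.single i 1))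
    (ContinuousLinearMap.apply ℝ ℝ (EuclideanSpace.single i 1))

section Euclidean

variable {ι : Type*} [Fintype ι] [DecidableEq ι]

set_option maxSynthPendingDepth 3 in
theorem dirichletForm_apply (p q : EuclideanSpace ℝ ι →L[ℝ] ℝ) :
    dirichletForm ι p q =
      ∑ i, p (EuclideanSpace.single i 1) * q (EuclideanSpace.single i 1) := by
  simp [dirichletForm]

theorem map_eq_sum_smul_single {𝕜 F : Type*} [RCLike 𝕜] [AddCommMonoid F] [Module 𝕜 F]
    (p : EuclideanSpace 𝕜 ι →ₗ[𝕜] F) (v : EuclideanSpace 𝕜 ι) :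
    p v = ∑ i, v i • p (EuclideanSpace.single i 1) := by
  conv_lhs => rw [← (EuclideanSpace.basisFun ι 𝕜).sum_repr v]
  simp

theorem trace_eq_sum_apply_single {𝕜 : Type*} [RCLike 𝕜]
    (M : EuclideanSpace 𝕜 ι →ₗ[𝕜] EuclideanSpace 𝕜 ι) :
    LinearMap.trace 𝕜 (EuclideanSpace 𝕜 ι) M = ∑ i, M (EuclideanSpace.single i 1) i := by
  simp [LinearMap.trace_eq_sum_inner _ (EuclideanSpace.basisFun ι 𝕜),
    EuclideanSpace.inner_single_left]

theorem densityVariation_dirichletForm (M : EuclideanSpace ℝ ι →L[ℝ] EuclideanSpace ℝ ι)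
    (p q : EuclideanSpace ℝ ι →L[ℝ] ℝ) :
    densityVariation (dirichletForm ι) M p q =
      (∑ i, M (EuclideanSpace.single i 1) i) *
          ∑ i, p (EuclideanSpace.single i 1) * q (EuclideanSpace.single i 1) -
        ∑ i, ∑ j,
          (p (EuclideanSpace.single i 1) * q (EuclideanSpace.single j 1) +
              p (EuclideanSpace.single j 1) * q (EuclideanSpace.single i 1)) *
            M (EuclideanSpace.single j 1) i := by
  have hcomp (r : EuclideanSpace ℝ ι →L[ℝ] ℝ) (j : ι) :
      (r ∘L M) (EuclideanSpace.single j 1) =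
        ∑ i, M (EuclideanSpace.single j 1) i * r (EuclideanSpace.single i 1) :=
    map_eq_sum_smul_single r.toLinearMap _
  have hp : dirichletForm ι (p ∘L M) q = ∑ i, ∑ j, p (EuclideanSpace.single i 1) *
      q (EuclideanSpace.single j 1) * M (EuclideanSpace.single j 1) i := by
    simp only [dirichletForm_apply, hcomp, Finset.sum_mul]
    rw [Finset.sum_comm]
    exact Finset.sum_congr rfl fun i _ => Finset.sum_congr rfl fun j _ => by ring
  have hq : dirichletForm ι p (q ∘L M) = ∑ i, ∑ j, p (EuclideanSpace.single j 1) *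
      q (EuclideanSpace.single i 1) * M (EuclideanSpace.single j 1) i := by
    simp only [dirichletForm_apply, hcomp, Finset.mul_sum]
    rw [Finset.sum_comm]
    exact Finset.sum_congr rfl fun i _ => Finset.sum_congr rfl fun j _ => by ring
  have htrace := trace_eq_sum_apply_single M.toLinearMap
  simp only [ContinuousLinearMap.coe_coe] at htrace
  simp only [densityVariation, hp, hq, htrace, dirichletForm_apply,
    smul_eq_mul, add_mul, Finset.sum_add_distrib, sub_sub]

end Euclidean

/-- Derivative of the Dirichlet energy under domain perturbation: for `ψ : ℝⁿ → ℝⁿ`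
of class `C¹` with bounded `C¹` norm, `Ω` bounded open, `u, φ ∈ C²(ℝⁿ)`, and
`Ω_ε = (I + εψ)(Ω)`, the function
`𝒜(ε) = ∫_{Ω_ε} ∇(u ∘ (I+εψ)⁻¹) · ∇(φ ∘ (I+εψ)⁻¹)` is differentiable at `ε = 0` with
`𝒜'(0) = ∫_Ω [div ψ ∇u·∇φ − Σ_{ij} (∂ᵢu ∂ⱼφ + ∂ⱼu ∂ᵢφ) ∂ⱼψᵢ]`. -/
theorem stmt18 {n : ℕ} (ψ : EuclideanSpace ℝ (Fin n) → EuclideanSpace ℝ (Fin n))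
    (hψ : ContDiff ℝ 1 ψ) (Cψ : ℝ) (hbound : ∀ x, ‖ψ x‖ + ‖fderiv ℝ ψ x‖ ≤ Cψ)
    (Ω : Set (EuclideanSpace ℝ (Fin n))) (hΩ : IsOpen Ω) (hΩb : Bornology.IsBounded Ω)
    (u φ : EuclideanSpace ℝ (Fin n) → ℝ) (hu : ContDiff ℝ 2 u) (hφ : ContDiff ℝ 2 φ) :
    HasDerivAt
      (fun ε : ℝ =>
        ∫ ξ in (fun x => x + ε • ψ x) '' Ω,
          ∑ i : Fin n,
            fderiv ℝ (u ∘ Function.invFun (fun x => x + ε • ψ x)) ξ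
                (EuclideanSpace.single i 1) *
              fderiv ℝ (φ ∘ Function.invFun (fun x => x + ε • ψ x)) ξ
                (EuclideanSpace.single i 1))
      (∫ x in Ω,
        ((∑ i : Fin n, fderiv ℝ ψ x (EuclideanSpace.single i 1) i) *
            ∑ i : Fin n,
              fderiv ℝ u x (EuclideanSpace.single i 1) *
                fderiv ℝ φ x (EuclideanSpace.single i 1) -
          ∑ i : Fin n, ∑ j : Fin n,
            (fderiv ℝ u x (EuclideanSpace.single i 1) *
                fderiv ℝ φ x (EuclideanSpace.single j 1) +
              fderiv ℝ u x (EuclideanSpace.single j 1) *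
                fderiv ℝ φ x (EuclideanSpace.single i 1)) *
              fderiv ℝ ψ x (EuclideanSpace.single j 1) i))
      0 := by
  simpa only [dirichletForm_apply, densityVariation_dirichletForm] using
    stmt18_general volume (dirichletForm (Fin n)) hψ
      (fun x => (le_add_of_nonneg_left (norm_nonneg _)).trans (hbound x)) hΩ.measurableSet hΩb
      (hu.of_le one_le_two) (hφ.of_le one_le_two)
end
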